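/- Let K be a field containing the roots e₁,…,e_n of a separable polynomial P, and consider the surface X: u₁u₂ = P(t) over K with U = {P(t) ≠ 0} ⊂ X. The group O(U)*/K* is a free abelian group of rank n+1, generated by the classes of t−e₁,…,t−e_n, u₁, u₂, subject to the single relation [u₁] + [u₂] = Σ_{j=1}^{n} [t−e_j]. -/

import Mathlib

open MvPolynomial

section UnitsAtPrime

variable {B F : Type*} [CommRing B] [Field F] [Algebra B F]

/-- The units of the localization of `B` at the prime element `p`, as a subgroup of `Fˣ`. -/
def unitsAtPrime (F : Type*) [Field F] [Algebra B F] {p : B} (hp : Prime p) : Subgroup Fˣ where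
  carrier := {q | ∃ x y : B, ¬ p ∣ x ∧ ¬ p ∣ y ∧ (q : F) * algebraMap B F y = algebraMap B F x}
  one_mem' := ⟨1, 1, hp.not_dvd_one, hp.not_dvd_one, by simp⟩
  mul_mem' := by
    rintro q r ⟨x, y, hx, hy, h⟩ ⟨x', y', hx', hy', h'⟩
    refine ⟨x * x', y * y', fun hd => (hp.dvd_or_dvd hd).elim hx hx',
      fun hd => (hp.dvd_or_dvd hd).elim hy hy', ?_⟩
    rw [map_mul, map_mul, ← h, ← h']
    push_cast
    ring
  inv_mem' := by
    rintro q ⟨x, y, hx, hy, h⟩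
    exact ⟨y, x, hy, hx, by simp [← h]⟩

theorem mem_unitsAtPrime {p : B} (hp : Prime p) {q : Fˣ} {x : B}
    (hx : ¬ p ∣ x) (hq : (q : F) = algebraMap B F x) : q ∈ unitsAtPrime F hp :=
  ⟨x, 1, hx, hp.not_dvd_one, by simp [hq]⟩

theorem eq_zero_of_pow_mem_unitsAtPrime [IsFractionRing B F] {p : B} (hp : Prime p) {q : Fˣ}
    (hq : (q : F) = algebraMap B F p) {k : ℕ} (h : q ^ k ∈ unitsAtPrime F hp) : k = 0 := by
  obtain ⟨x, y, hx, -, hxy⟩ := h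
  by_contra hk
  apply hx
  rw [Units.val_pow_eq_pow_val, hq, ← map_pow, ← map_mul] at hxy
  rw [← IsFractionRing.injective B F hxy]
  exact (dvd_pow_self p hk).mul_right y

theorem eq_zero_of_zpow_mem_unitsAtPrime [IsFractionRing B F] {p : B} (hp : Prime p) {q : Fˣ}
    (hq : (q : F) = algebraMap B F p) {k : ℤ} (h : q ^ k ∈ unitsAtPrime F hp) : k = 0 := by
  obtain ⟨m, rfl | rfl⟩ := k.eq_nat_or_neg
  · simpa using eq_zero_of_pow_mem_unitsAtPrime hp hq (by simpa using h)
  · simpa using eq_zero_of_pow_mem_unitsAtPrime hp hq (by simpa using h)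

end UnitsAtPrime

/-- The elements of `B` all of whose divisors are mapped by `f` to units in the subgroup `H`. -/
def submonoidOfDivisorsMapInto {B S : Type*} [CommRing B] [DecompositionMonoid B] [CommRing S]
    (f : B →+* S) (H : Subgroup Sˣ) (hH : ∀ g, IsUnit g → ∃ s ∈ H, (s : S) = f g) :
    Submonoid B where
  carrier := {d | ∀ g, g ∣ d → ∃ s ∈ H, (s : S) = f g}
  one_mem' := fun g hg => hH g (isUnit_of_dvd_one hg)
  mul_mem' := by
    intro d d' hd hd' g hg
    obtain ⟨g₁, g₂, h₁, h₂, rfl⟩ := exists_dvd_and_dvd_of_dvd_mul hg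
    obtain ⟨s₁, hs₁, e₁⟩ := hd _ h₁
    obtain ⟨s₂, hs₂, e₂⟩ := hd' _ h₂
    exact ⟨s₁ * s₂, H.mul_mem hs₁ hs₂, by simp [e₁, e₂]⟩

theorem prime_mem_submonoidOfDivisorsMapInto {B S : Type*} [CommRing B] [IsDomain B]
    [DecompositionMonoid B]
    [CommRing S] (f : B →+* S) (H : Subgroup Sˣ)
    (hH : ∀ g, IsUnit g → ∃ s ∈ H, (s : S) = f g) {p : B} (hp : Prime p) {s : Sˣ} (hs : s ∈ H)
    (hsp : (s : S) = f p) : p ∈ submonoidOfDivisorsMapInto f H hH := by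
  intro g hg
  rcases hp.irreducible.dvd_iff.1 hg with h | h
  · exact hH g h
  · obtain ⟨v, hv⟩ := h
    obtain ⟨r, hr, er⟩ := hH v v.isUnit
    exact ⟨s * r, H.mul_mem hs hr, by simp [hsp, er, ← hv]⟩

/-- The elements `s` of `S` such that `s * f w ^ m` is in the range of `f` for some `m`. -/
def subringOfMulPowMemRange {B S : Type*} [CommRing B] [CommRing S] (f : B →+* S) (w : B) :
    Subring S where
  carrier := {s | ∃ m : ℕ, ∃ g, s * f w ^ m = f g}
  one_mem' := ⟨0, 1, by simp⟩
  zero_mem' := ⟨0, 0, by simp⟩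
  mul_mem' := by
    rintro s s' ⟨m, g, h⟩ ⟨m', g', h'⟩
    exact ⟨m + m', g * g', by rw [map_mul, ← h, ← h']; ring⟩
  add_mem' := by
    rintro s s' ⟨m, g, h⟩ ⟨m', g', h'⟩
    refine ⟨m + m', g * w ^ m' + g' * w ^ m, ?_⟩
    rw [map_add, map_mul, map_mul, ← h, ← h', map_pow, map_pow]
    ring
  neg_mem' := by
    rintro s ⟨m, g, h⟩
    exact ⟨m, -g, by rw [map_neg, ← h]; ring⟩

theorem map_mem_subringOfMulPowMemRange {B S : Type*} [CommRing B] [CommRing S] (f : B →+* S)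
    (w g : B) : f g ∈ subringOfMulPowMemRange f w :=
  ⟨0, g, by simp⟩

theorem units_mod_constants_of_embedding
    {K : Type*} [Field K] {n : ℕ} (c : K) (hc : c ≠ 0)
    (e : Fin n → K) (he : Function.Injective e)
    {S : Type*} [CommRing S] (κ : K →+* S) (t : S)
    (a : Fin n → Sˣ) (ha : ∀ j, (a j : S) = t - κ (e j))
    (b₁ b₂ : Sˣ) (hb : (b₁ * b₂ : S) = κ c * ∏ j, (a j : S))
    (hgen : ∀ Q : Subring S, (∀ k, κ k ∈ Q) → t ∈ Q → (b₁ : S) ∈ Q → (b₂ : S) ∈ Q →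
      (((∏ j, a j)⁻¹ : Sˣ) : S) ∈ Q → ∀ s, s ∈ Q)
    {F : Type*} [Field F] [Algebra (Polynomial (Polynomial K)) F]
    [IsFractionRing (Polynomial (Polynomial K)) F]
    (θ : S →+* F)
    (hκ : ∀ k, θ (κ k) = algebraMap (Polynomial (Polynomial K)) F (Polynomial.C (Polynomial.C k)))
    (ht : θ t = algebraMap (Polynomial (Polynomial K)) F (Polynomial.C Polynomial.X))
    (hb₁ : θ b₁ = algebraMap (Polynomial (Polynomial K)) F Polynomial.X)
    (N : Subgroup Sˣ) (hN : N = (Units.map κ.toMonoidHom).range) :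
    ∃ φ : ((Fin n → ℤ) × ℤ × ℤ) →+ Additive (Sˣ ⧸ N),
      (∀ j, φ (Pi.single j 1, 0, 0) = Additive.ofMul (QuotientGroup.mk (a j) : _ ⧸ N)) ∧
      φ (0, 1, 0) = Additive.ofMul (QuotientGroup.mk b₁ : _ ⧸ N) ∧
      φ (0, 0, 1) = Additive.ofMul (QuotientGroup.mk b₂ : _ ⧸ N) ∧
      Function.Surjective φ ∧
      φ.ker = AddSubgroup.zmultiples (((fun _ => 1) : Fin n → ℤ), (-1 : ℤ), (-1 : ℤ)) := by
  classical
  let Φ : ((Fin n → ℤ) × ℤ × ℤ) →+ Additive Sˣ :=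
    { toFun := fun v => Additive.ofMul ((∏ j, a j ^ v.1 j) * b₁ ^ v.2.1 * b₂ ^ v.2.2)
      map_zero' := by simp
      map_add' := by
        intro v w
        rw [← ofMul_mul]
        congr 1
        simp only [Prod.fst_add, Prod.snd_add, Pi.add_apply, zpow_add, Finset.prod_mul_distrib]
        rw [mul_mul_mul_comm (∏ j, a j ^ v.1 j) (∏ j, a j ^ w.1 j),
          mul_mul_mul_comm ((∏ j, a j ^ v.1 j) * _)] }
  let φ : ((Fin n → ℤ) × ℤ × ℤ) →+ Additive (Sˣ ⧸ N) :=
    (MonoidHom.toAdditive (QuotientGroup.mk' N)).comp Φ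
  have hφ : ∀ v, φ v = Additive.ofMul (QuotientGroup.mk
      ((∏ j, a j ^ v.1 j) * b₁ ^ v.2.1 * b₂ ^ v.2.2) : _ ⧸ N) := fun _ => rfl
  have hφa : ∀ j, φ (Pi.single j 1, 0, 0) =
      Additive.ofMul (QuotientGroup.mk (a j) : _ ⧸ N) := by
    intro j
    rw [hφ]
    congr 2
    simp only [zpow_zero, mul_one]
    rw [Finset.prod_eq_single j]
    · simp
    · intro i _ hij; simp [hij]
    · simp
  have hφ₁ : φ (0, 1, 0) = Additive.ofMul (QuotientGroup.mk b₁ : _ ⧸ N) := by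
    rw [hφ]; simp
  have hφ₂ : φ (0, 0, 1) = Additive.ofMul (QuotientGroup.mk b₂ : _ ⧸ N) := by
    rw [hφ]; simp
  have hrel : b₁ * b₂ = Units.map κ.toMonoidHom (Units.mk0 c hc) * ∏ j, a j := by
    ext; simpa using hb
  refine ⟨φ, hφa, hφ₁, hφ₂, ?_, ?_⟩
  · let ψ : Polynomial (Polynomial K) →+* S :=
      Polynomial.eval₂RingHom (Polynomial.eval₂RingHom κ t) b₁
    have hψC : ∀ k, ψ (Polynomial.C (Polynomial.C k)) = κ k := fun k => by simp [ψ]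
    have hψt : ψ (Polynomial.C Polynomial.X) = t := by simp [ψ]
    have hψX : ψ Polynomial.X = b₁ := by simp [ψ]
    have hθψ : ∀ g, θ (ψ g) = algebraMap (Polynomial (Polynomial K)) F g := by
      have : θ.comp ψ = algebraMap (Polynomial (Polynomial K)) F := by
        apply Polynomial.ringHom_ext'
        · apply Polynomial.ringHom_ext
          · intro k; simp [hψC, hκ]
          · simp [hψt, ht]
        · simp [hψX, hb₁]
      exact fun g => RingHom.congr_fun this g
    let H : Subgroup Sˣ := (AddSubgroup.toSubgroup' φ.range).comap (QuotientGroup.mk' N)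
    have hH : ∀ s, s ∈ H ↔ ∃ v, φ v = Additive.ofMul (QuotientGroup.mk s : _ ⧸ N) :=
      fun s => Iff.rfl
    have hNH : N ≤ H := by
      intro s hs
      rw [hH]
      exact ⟨0, by rw [map_zero, (QuotientGroup.eq_one_iff s).2 hs]; rfl⟩
    have haH : ∀ j, a j ∈ H := fun j => (hH _).2 ⟨_, hφa j⟩
    have hbH : b₁ ∈ H := (hH _).2 ⟨_, hφ₁⟩
    have hunit : ∀ g : Polynomial (Polynomial K), IsUnit g → ∃ s ∈ H, (s : S) = ψ g := by
      intro g hg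
      obtain ⟨r, hr, rfl⟩ := Polynomial.isUnit_iff.1 hg
      obtain ⟨k, hk, rfl⟩ := Polynomial.isUnit_iff.1 hr
      refine ⟨Units.map κ.toMonoidHom hk.unit, hNH (hN ▸ ⟨_, rfl⟩), ?_⟩
      simp [hψC]
    let D := submonoidOfDivisorsMapInto ψ H hunit
    let q : Fin n → Polynomial (Polynomial K) :=
      fun j => Polynomial.C (Polynomial.X - Polynomial.C (e j))
    have hψq : ∀ j, ψ (q j) = a j := by
      intro j
      simp only [q, map_sub, hψC, hψt, ha]
    let w : Polynomial (Polynomial K) := Polynomial.X * ∏ j, q j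
    have hψw : ψ w = b₁ * ∏ j, (a j : S) := by
      simp only [w, map_mul, map_prod, hψq, hψX]
    have hwD : w ∈ D := by
      refine D.mul_mem (prime_mem_submonoidOfDivisorsMapInto ψ H hunit Polynomial.prime_X hbH
        hψX.symm) (D.prod_mem fun j _ => prime_mem_submonoidOfDivisorsMapInto ψ H hunit
          (Polynomial.prime_C_iff.2 (Polynomial.prime_X_sub_C _)) (haH j) (hψq j).symm)
    have hloc : ∀ s : S, s ∈ subringOfMulPowMemRange ψ w := by
      apply hgen
      · exact fun k => hψC k ▸ map_mem_subringOfMulPowMemRange ψ w _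
      · exact hψt ▸ map_mem_subringOfMulPowMemRange ψ w _
      · exact hψX ▸ map_mem_subringOfMulPowMemRange ψ w _
      · refine ⟨1, Polynomial.C (Polynomial.C c) * (∏ j, q j) ^ 2, ?_⟩
        simp only [map_mul, map_pow, map_prod, hψq, hψC, hψw]
        linear_combination (∏ j, (a j : S)) * hb
      · refine ⟨1, Polynomial.X, ?_⟩
        rw [hψw, hψX, pow_one, mul_left_comm, ← Units.coe_prod, Units.inv_mul, mul_one]
    have hsurj : ∀ s : Sˣ, s ∈ H := by
      intro s
      obtain ⟨m, g, hg⟩ := hloc s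
      obtain ⟨k, h, hh⟩ := hloc ((s⁻¹ : Sˣ) : S)
      have hgh : g * h = w ^ (m + k) := by
        apply IsFractionRing.injective (Polynomial (Polynomial K)) F
        rw [← hθψ, ← hθψ, map_mul, ← hg, ← hh, map_pow]
        congr 1
        linear_combination ψ w ^ m * ψ w ^ k * s.mul_inv
      obtain ⟨r, hr, hrg⟩ := D.pow_mem hwD (m + k) g ⟨h, hgh.symm⟩
      have hs : s = r * ((b₁ * ∏ j, a j) ^ m)⁻¹ := by
        rw [eq_mul_inv_iff_mul_eq]
        ext
        rw [hrg, ← hg, hψw]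
        simp
      rw [hs]
      exact H.mul_mem hr (H.inv_mem (H.pow_mem (H.mul_mem hbH (H.prod_mem fun j _ => haH j)) m))
    intro y
    obtain ⟨s, hs⟩ := QuotientGroup.mk_surjective (Additive.toMul y)
    obtain ⟨v, hv⟩ := (hH s).1 (hsurj s)
    exact ⟨v, by rw [hv, hs]; rfl⟩
  · apply le_antisymm
    · rintro ⟨x, y, z⟩ hv
      rw [AddMonoidHom.mem_ker, hφ] at hv
      have hv' : (∏ j, a j ^ x j) * b₁ ^ y * b₂ ^ z ∈ N := (QuotientGroup.eq_one_iff _).1 hv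
      rw [hN] at hv'
      obtain ⟨k, hk⟩ := hv'
      let θ' : Sˣ →* Fˣ := Units.map θ.toMonoidHom
      let κ' : Kˣ →* Sˣ := Units.map κ.toMonoidHom
      have hb₂' : b₂ = b₁⁻¹ * (κ' (Units.mk0 c hc) * ∏ j, a j) := by
        rw [← hrel, inv_mul_cancel_left]
      have hmain : (∏ j, θ' (a j) ^ (x j + z)) * θ' b₁ ^ (y - z) =
          θ' (κ' (k * (Units.mk0 c hc)⁻¹ ^ z)) := by
        have h1 : κ' k = (∏ j, a j ^ x j) * b₁ ^ y * b₂ ^ z := hk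
        rw [map_mul κ', h1, hb₂', map_zpow κ', map_inv κ', map_mul θ', map_mul θ', map_mul θ']
        simp only [map_zpow, map_mul, map_inv, map_prod, mul_zpow, zpow_add, zpow_sub,
          Finset.prod_mul_distrib, Finset.prod_zpow, inv_zpow]
        generalize θ' (κ' (Units.mk0 c hc)) ^ z = γ
        generalize (∏ j, θ' (a j) ^ x j) = α
        generalize (∏ j, θ' (a j)) ^ z = β
        generalize θ' b₁ ^ y = δ
        generalize θ' b₁ ^ z = η
        rw [mul_assoc (α * δ), mul_comm γ β, mul_assoc η⁻¹, mul_assoc β, mul_inv_cancel, mul_one]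
        rw [mul_comm η⁻¹ β, mul_mul_mul_comm]
      have hθa : ∀ j, (θ' (a j) : F) =
          algebraMap (Polynomial (Polynomial K)) F
            (Polynomial.C (Polynomial.X - Polynomial.C (e j))) := by
        intro j
        change θ (a j) = _
        rw [ha, map_sub, hκ, ht, ← map_sub, ← map_sub]
      have hθb : (θ' b₁ : F) = algebraMap (Polynomial (Polynomial K)) F Polynomial.X := hb₁
      have hconst : ∀ {p : Polynomial (Polynomial K)} (hp : Prime p) (r : Kˣ),
          θ' (κ' r) ∈ unitsAtPrime F hp := by
        intro p hp r
        refine mem_unitsAtPrime hp (x := Polynomial.C (Polynomial.C (r : K))) ?_ (hκ r)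
        intro hd
        exact hp.not_isUnit (isUnit_of_dvd_unit hd
          ((r.isUnit.map Polynomial.C).map Polynomial.C))
      have hyz : y - z = 0 := by
        have hp : Prime (Polynomial.X : Polynomial (Polynomial K)) := Polynomial.prime_X
        apply eq_zero_of_zpow_mem_unitsAtPrime hp hθb
        rw [← eq_inv_mul_iff_mul_eq] at hmain
        rw [hmain]
        refine Subgroup.mul_mem _ (Subgroup.inv_mem _ (Subgroup.prod_mem _ fun j _ =>
          Subgroup.zpow_mem _ (mem_unitsAtPrime hp ?_ (hθa j)) _)) (hconst hp _)
        rw [Polynomial.X_dvd_iff, Polynomial.coeff_C_zero]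
        exact Polynomial.X_sub_C_ne_zero _
      have hxz : ∀ j, x j + z = 0 := by
        intro j
        have hp : Prime (Polynomial.C (Polynomial.X - Polynomial.C (e j)) :
            Polynomial (Polynomial K)) :=
          Polynomial.prime_C_iff.2 (Polynomial.prime_X_sub_C _)
        apply eq_zero_of_zpow_mem_unitsAtPrime hp (hθa j)
        rw [hyz, zpow_zero, mul_one, ← Finset.mul_prod_erase _ _ (Finset.mem_univ j),
          ← eq_mul_inv_iff_mul_eq] at hmain
        rw [hmain]
        refine Subgroup.mul_mem _ (hconst hp _) (Subgroup.inv_mem _ (Subgroup.prod_mem _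
          fun i hi => Subgroup.zpow_mem _ (mem_unitsAtPrime hp ?_ (hθa i)) _))
        intro hd
        have h0 := Polynomial.dvd_iff_isRoot.1 ((Polynomial.C_dvd_iff_dvd_coeff _ _).1 hd 0)
        simp only [Polynomial.coeff_C_zero, Polynomial.IsRoot.def, Polynomial.eval_sub,
          Polynomial.eval_X, Polynomial.eval_C, sub_eq_zero] at h0
        exact Finset.ne_of_mem_erase hi (he h0).symm
      refine AddSubgroup.mem_zmultiples_iff.2 ⟨-z, ?_⟩
      ext j
      · have := hxz j
        simp
        omega
      · simp
        omega
      · simp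
    · rw [AddSubgroup.zmultiples_le, AddMonoidHom.mem_ker, hφ]
      change (QuotientGroup.mk _ : _ ⧸ N) = 1
      rw [QuotientGroup.eq_one_iff, hN]
      refine ⟨(Units.mk0 c hc)⁻¹, ?_⟩
      rw [map_inv]
      simp only [zpow_one, zpow_neg, mul_assoc, ← mul_inv_rev]
      rw [mul_comm b₂, hrel, mul_inv_rev, mul_inv_cancel_left]

/-- For the surface `X : u₁u₂ = P(t)` with `P(t) = c(t-e₁)⋯(t-e_n)` separable, and
`U = {P(t) ≠ 0} ⊆ X`, the group `O(U)*/K*` is free abelian of rank `n + 1`,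
generated by the classes of `t - e₁, …, t - e_n, u₁, u₂` subject to the single
relation `[u₁] + [u₂] = Σ_j [t - e_j]`.  This is expressed by saying that the
homomorphism from `ℤⁿ × ℤ × ℤ` to `O(U)*/K*` sending the standard generators to
these classes is surjective with kernel exactly the multiples of the single
relation `((1,…,1), -1, -1)`. -/
theorem units_mod_constants_of_affine_chatelet
    (K : Type) [Field K] (n : ℕ) (hn : 0 < n) (c : K) (hc : c ≠ 0)
    (e : Fin n → K) (he : Function.Injective e)
    (P : MvPolynomial (Fin 3) K)
    (hP : P = C c * ∏ j : Fin n, (X 2 - C (e j)))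
    (I : Ideal (MvPolynomial (Fin 3) K))
    (hI : I = Ideal.span {X 0 * X 1 - P})
    (a : Fin n → (Localization.Away (Ideal.Quotient.mk I P))ˣ)
    (ha : ∀ j, (a j : Localization.Away (Ideal.Quotient.mk I P)) =
      algebraMap _ _ (Ideal.Quotient.mk I (X 2 - C (e j))))
    (b₁ b₂ : (Localization.Away (Ideal.Quotient.mk I P))ˣ)
    (hb₁ : (b₁ : Localization.Away (Ideal.Quotient.mk I P)) =
      algebraMap _ _ (Ideal.Quotient.mk I (X 0)))
    (hb₂ : (b₂ : Localization.Away (Ideal.Quotient.mk I P)) =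
      algebraMap _ _ (Ideal.Quotient.mk I (X 1)))
    (N : Subgroup (Localization.Away (Ideal.Quotient.mk I P))ˣ)
    (hN : N = (Units.map
      (((algebraMap (MvPolynomial (Fin 3) K ⧸ I)
          (Localization.Away (Ideal.Quotient.mk I P))).comp
        (algebraMap K (MvPolynomial (Fin 3) K ⧸ I))).toMonoidHom)).range) :
    ∃ φ : ((Fin n → ℤ) × ℤ × ℤ) →+
        Additive ((Localization.Away (Ideal.Quotient.mk I P))ˣ ⧸ N),
      (∀ j, φ (Pi.single j 1, 0, 0) =
          Additive.ofMul (QuotientGroup.mk (a j) : _ ⧸ N)) ∧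
      φ (0, 1, 0) = Additive.ofMul (QuotientGroup.mk b₁ : _ ⧸ N) ∧
      φ (0, 0, 1) = Additive.ofMul (QuotientGroup.mk b₂ : _ ⧸ N) ∧
      Function.Surjective φ ∧
      φ.ker = AddSubgroup.zmultiples (((fun _ => 1) : Fin n → ℤ), (-1 : ℤ), (-1 : ℤ)) := by
  let R := MvPolynomial (Fin 3) K ⧸ I
  let S := Localization.Away (Ideal.Quotient.mk I P)
  let F := FractionRing (Polynomial (Polynomial K))
  let ρ : MvPolynomial (Fin 3) K →+* S :=
    (algebraMap R S).comp (Ideal.Quotient.mk I)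
  let κ : K →+* S := (algebraMap R S).comp (algebraMap K R)
  have hκρ : ∀ k, ρ (C k) = κ k := fun _ => rfl
  have hρa : ∀ j, (a j : S) = ρ (X 2) - κ (e j) := by
    intro j
    rw [ha, ← hκρ, ← map_sub]
    rfl
  have hρP : ρ P = κ c * ∏ j, (a j : S) := by
    simp only [hP, map_mul, map_prod, map_sub, hκρ, hρa]
  have hrel : (b₁ * b₂ : S) = κ c * ∏ j, (a j : S) := by
    rw [← hρP, hb₁, hb₂]
    change ρ (X 0) * ρ (X 1) = ρ P
    rw [← map_mul]
    refine congrArg (algebraMap R S) (Ideal.Quotient.eq.2 ?_)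
    rw [hI]
    exact Ideal.mem_span_singleton_self _
  let ι : Polynomial (Polynomial K) →+* F := algebraMap (Polynomial (Polynomial K)) F
  let p : Polynomial (Polynomial K) := Polynomial.C (Polynomial.C c) *
    ∏ j, Polynomial.C (Polynomial.X - Polynomial.C (e j))
  have hp : ι p ≠ 0 := by
    rw [map_ne_zero_iff ι (IsFractionRing.injective (Polynomial (Polynomial K)) F)]
    refine mul_ne_zero (Polynomial.C_ne_zero.2 (Polynomial.C_ne_zero.2 hc))
      (Finset.prod_ne_zero_iff.2 fun j _ => ?_)
    exact Polynomial.C_ne_zero.2 (Polynomial.X_sub_C_ne_zero (e j))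
  have hX : ι Polynomial.X ≠ 0 := by
    rw [map_ne_zero_iff ι (IsFractionRing.injective (Polynomial (Polynomial K)) F)]
    exact Polynomial.X_ne_zero
  let θ₀ : MvPolynomial (Fin 3) K →+* F :=
    eval₂Hom (ι.comp (Polynomial.C.comp Polynomial.C))
      ![ι Polynomial.X, ι p / ι Polynomial.X, ι (Polynomial.C Polynomial.X)]
  have hθ₀C : ∀ k, θ₀ (C k) = ι (Polynomial.C (Polynomial.C k)) := fun k => by simp [θ₀]
  have hθ₀0 : θ₀ (X 0) = ι Polynomial.X := by simp [θ₀]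
  have hθ₀1 : θ₀ (X 1) = ι p / ι Polynomial.X := by simp [θ₀]
  have hθ₀2 : θ₀ (X 2) = ι (Polynomial.C Polynomial.X) := by simp [θ₀]
  have hθ₀P : θ₀ P = ι p := by
    simp only [hP, p, map_mul, map_prod, map_sub, hθ₀C, hθ₀2]
  have hθ₀I : ∀ f ∈ I, θ₀ f = 0 := by
    have : I ≤ RingHom.ker θ₀ := by
      rw [hI, Ideal.span_singleton_le_iff_mem, RingHom.mem_ker, map_sub, map_mul, hθ₀0, hθ₀1,
        hθ₀P, mul_div_cancel₀ _ hX, sub_self]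
    exact fun f hf => this hf
  let θ₁ : R →+* F := Ideal.Quotient.lift I θ₀ hθ₀I
  have hθ₁P : IsUnit (θ₁ (Ideal.Quotient.mk I P)) := by
    rw [Ideal.Quotient.lift_mk, hθ₀P]
    exact hp.isUnit
  let θ : S →+* F := IsLocalization.Away.lift (Ideal.Quotient.mk I P) hθ₁P
  have hθρ : ∀ f, θ (ρ f) = θ₀ f := fun f =>
    (IsLocalization.Away.lift_eq (Ideal.Quotient.mk I P) hθ₁P (Ideal.Quotient.mk I f)).trans
      (Ideal.Quotient.lift_mk I θ₀ hθ₀I)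
  refine units_mod_constants_of_embedding c hc e he κ (ρ (X 2)) a hρa b₁ b₂ hrel ?_ θ
    (fun k => by rw [← hκρ, hθρ, hθ₀C]) (by rw [hθρ, hθ₀2])
    (by rw [hb₁]; exact (hθρ (X 0)).trans hθ₀0) N hN
  intro Q hQκ hQt hQ₁ hQ₂ hQinv s
  have hQρ : ∀ f, ρ f ∈ Q := by
    intro f
    induction f using MvPolynomial.induction_on with
    | C k => exact hQκ k
    | add f g hf hg => rw [map_add]; exact Q.add_mem hf hg
    | mul_X f i hf =>
      rw [map_mul]
      refine Q.mul_mem hf ?_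
      fin_cases i
      · exact hb₁ ▸ hQ₁
      · exact hb₂ ▸ hQ₂
      · exact hQt
  obtain ⟨m, r, hr⟩ := IsLocalization.Away.surj (Ideal.Quotient.mk I P) s
  obtain ⟨f, rfl⟩ := Ideal.Quotient.mk_surjective r
  have hs : s * ρ P ^ m = ρ f := hr
  have hinv : ρ P * (κ c⁻¹ * (((∏ j, a j)⁻¹ : Sˣ) : S)) = 1 := by
    have h1 : κ c * κ c⁻¹ = 1 := by rw [← map_mul, mul_inv_cancel₀ hc, map_one]
    rw [hρP, mul_mul_mul_comm, h1, one_mul, ← Units.coe_prod, Units.mul_inv]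
  have hs' : s = ρ f * (κ c⁻¹ * (((∏ j, a j)⁻¹ : Sˣ) : S)) ^ m := by
    rw [← hs, mul_assoc, ← mul_pow, hinv, one_pow, mul_one]
  rw [hs']
  exact Q.mul_mem (hQρ f) (Q.pow_mem (Q.mul_mem (hQκ _) hQinv) m)
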